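/- For integer n ≥ 2, lim_{t→0⁺} tⁿ · ∑_{w=n-1}^∞ w^{n-1} · (1/(1-e^{-2tw})^{n-1} - 1) = ∫₀^∞ x^{n-1} (1/(1-e^{-2x})^{n-1} - 1) dx. -/

import Mathlib

open Filter Real Set MeasureTheory

/-- The integrand. -/
noncomputable def fAux (m : ℕ) (x : ℝ) : ℝ :=
  x ^ m * (1 / (1 - Real.exp (-2 * x)) ^ m - 1)

lemma one_sub_exp_pos {x : ℝ} (hx : 0 < x) : 0 < 1 - Real.exp (-2 * x) := by
  have : Real.exp (-2 * x) < 1 := by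
    rw [← Real.exp_zero]; exact Real.exp_lt_exp.2 (by linarith)
  linarith

lemma fAux_nonneg (m : ℕ) {x : ℝ} (hx : 0 < x) : 0 ≤ fAux m x := by
  unfold fAux
  have h := one_sub_exp_pos hx
  have h1 : (1 - Real.exp (-2 * x)) ^ m ≤ 1 :=
    pow_le_one₀ h.le (by linarith [Real.exp_pos (-2 * x)])
  have h2 : 1 ≤ 1 / (1 - Real.exp (-2 * x)) ^ m := by
    rw [le_div_iff₀ (pow_pos h m)]; linarith
  exact mul_nonneg (pow_nonneg hx.le m) (by linarith)

lemma fAux_le (m : ℕ) {x : ℝ} (hx : 0 < x) :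
    fAux m x ≤ (m * m.factorial * Real.exp (1 / 2)) * Real.exp (-x) := by
  unfold fAux
  have h := one_sub_exp_pos hx
  have hb : 1 - (1 - Real.exp (-2 * x)) ^ m ≤ m * Real.exp (-2 * x) := by
    have := one_add_mul_le_pow (a := -Real.exp (-2 * x))
      (by linarith [one_sub_exp_pos hx]) m
    rw [sub_eq_add_neg 1 (Real.exp (-2 * x))]
    linarith
  have hy : x / (1 - Real.exp (-2 * x)) ≤ 1 / 2 + x := by
    rw [div_le_iff₀ h]
    have e1 : 2 * x + 1 ≤ Real.exp (2 * x) := Real.add_one_le_exp _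
    have e2 : Real.exp (2 * x) * Real.exp (-2 * x) = 1 := by
      rw [← Real.exp_add]; simp
    have e3 := mul_le_mul_of_nonneg_right e1 (Real.exp_pos (-2 * x)).le
    nlinarith
  have hp : (x / (1 - Real.exp (-2 * x))) ^ m ≤ m.factorial * Real.exp (1 / 2 + x) := by
    have h1 : (x / (1 - Real.exp (-2 * x))) ^ m ≤ (1 / 2 + x) ^ m :=
      pow_le_pow_left₀ (div_nonneg hx.le h.le) hy m
    have h2 := Real.pow_div_factorial_le_exp (1 / 2 + x) (by linarith) m
    rw [div_le_iff₀ (by positivity)] at h2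
    linarith
  have hpos : 0 ≤ (x / (1 - Real.exp (-2 * x))) ^ m := pow_nonneg (div_nonneg hx.le h.le) m
  have heq : x ^ m * (1 / (1 - Real.exp (-2 * x)) ^ m - 1)
      = (1 - (1 - Real.exp (-2 * x)) ^ m) * (x / (1 - Real.exp (-2 * x))) ^ m := by
    have := (pow_pos h m).ne'
    rw [div_pow]
    generalize (1 - Real.exp (-2 * x)) ^ m = b at this
    field_simp
  rw [heq]
  calc _ ≤ (m * Real.exp (-2 * x)) * (m.factorial * Real.exp (1 / 2 + x)) :=
        mul_le_mul hb hp hpos (by positivity)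
    _ = (m * m.factorial) * (Real.exp (-2 * x) * Real.exp (1 / 2 + x)) := by ring
    _ = (m * m.factorial) * (Real.exp (1 / 2) * Real.exp (-x)) := by
        rw [← Real.exp_add, ← Real.exp_add]; congr 2; ring
    _ = _ := by ring

lemma fAux_meas (m : ℕ) : Measurable (fAux m) := by
  unfold fAux; fun_prop

lemma fAux_cont (m : ℕ) {x : ℝ} (hx : 0 < x) : ContinuousAt (fAux m) x := by
  unfold fAux
  have h := (pow_pos (one_sub_exp_pos hx) m).ne'
  fun_prop (disch := assumption)

lemma iUnion_aux : (⋃ w : ℕ, Ico (w : ℝ) (w + 1)) = Ici 0 := by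
  ext x
  simp only [mem_iUnion, mem_Ico, mem_Ici]
  constructor
  · rintro ⟨w, h, _⟩
    exact (Nat.cast_nonneg w).trans h
  · intro h
    exact ⟨⌊x⌋₊, Nat.floor_le h, Nat.lt_floor_add_one x⟩

lemma sum_aux (g : ℕ → ℝ) (hg : IntegrableOn (fun y : ℝ => g ⌊y⌋₊) (Ioi 0)) :
    ∫ y in Ioi (0 : ℝ), g ⌊y⌋₊ = ∑' w, g w := by
  rw [← integral_Ici_eq_integral_Ioi, ← iUnion_aux]
  have hs := hasSum_integral_iUnion (μ := volume) (f := fun y : ℝ => g ⌊y⌋₊)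
    (s := fun w : ℕ => Ico (w : ℝ) (w + 1)) (fun w => measurableSet_Ico) ?_ ?_
  · rw [← hs.tsum_eq]
    refine tsum_congr fun w => ?_
    rw [setIntegral_congr_fun (g := fun _ => g w) measurableSet_Ico]
    · simp
    · intro y hy
      have : ⌊y⌋₊ = w := (Nat.floor_eq_iff ((Nat.cast_nonneg w).trans hy.1)).2 hy
      simp [this]
  · intro i j hij
    refine Set.disjoint_left.2 fun y hi hj => hij ?_
    rw [← (Nat.floor_eq_iff ((Nat.cast_nonneg i).trans hi.1)).2 hi,
      ← (Nat.floor_eq_iff ((Nat.cast_nonneg j).trans hj.1)).2 hj]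
  · rw [iUnion_aux, integrableOn_Ici_iff_integrableOn_Ioi]
    exact hg

lemma G_ge (m : ℕ) (hm : 1 ≤ m) {t : ℝ} (ht : 0 < t) (y : ℝ) :
    y ≤ t * ((⌊y / t⌋₊ : ℝ) + m) := by
  have h1 := (Nat.lt_floor_add_one (y / t)).le
  have h2 : (1 : ℝ) ≤ m := by exact_mod_cast hm
  have h3 : y / t ≤ (⌊y / t⌋₊ : ℝ) + m := by linarith
  rw [div_le_iff₀ ht] at h3
  linarith

lemma G_le (m : ℕ) {t : ℝ} (ht : 0 < t) {y : ℝ} (hy : 0 < y) :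
    t * ((⌊y / t⌋₊ : ℝ) + m) ≤ y + t * m := by
  have h1 := Nat.floor_le (div_pos hy ht).le
  rw [le_div_iff₀ ht] at h1
  linarith

lemma G_meas (m : ℕ) (t : ℝ) :
    Measurable fun y : ℝ => fAux m (t * ((⌊y / t⌋₊ : ℝ) + m)) := by
  refine (fAux_meas m).comp ?_
  have : Measurable fun y : ℝ => (⌊y / t⌋₊ : ℝ) :=
    measurable_from_nat.comp (Nat.measurable_floor.comp (measurable_id.div_const t))
  fun_prop

lemma G_bound (m : ℕ) (hm : 1 ≤ m) {t : ℝ} (ht : 0 < t) {y : ℝ} (hy : 0 < y) :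
    ‖fAux m (t * ((⌊y / t⌋₊ : ℝ) + m))‖ ≤
      (m * m.factorial * Real.exp (1 / 2)) * Real.exp (-y) := by
  have h := G_ge m hm ht y
  have hp := hy.trans_le h
  rw [Real.norm_of_nonneg (fAux_nonneg m hp)]
  refine (fAux_le m hp).trans ?_
  gcongr

lemma bound_int (m : ℕ) :
    IntegrableOn (fun y : ℝ => ((m * m.factorial * Real.exp (1 / 2)) * Real.exp (-y) : ℝ))
      (Ioi 0) :=
  (integrableOn_exp_neg_Ioi 0).const_mul _

lemma G_int (m : ℕ) (hm : 1 ≤ m) {t : ℝ} (ht : 0 < t) :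
    IntegrableOn (fun y : ℝ => fAux m (t * ((⌊y / t⌋₊ : ℝ) + m))) (Ioi 0) := by
  refine Integrable.mono' (bound_int m) (G_meas m t).aestronglyMeasurable ?_
  filter_upwards [ae_restrict_mem measurableSet_Ioi] with y hy
  exact G_bound m hm ht hy

lemma G_integral (m : ℕ) (hm : 1 ≤ m) {t : ℝ} (ht : 0 < t) :
    ∫ y in Ioi (0 : ℝ), fAux m (t * ((⌊y / t⌋₊ : ℝ) + m))
      = t * ∑' w : ℕ, fAux m (t * ((w : ℝ) + m)) := by
  have hc := integral_comp_mul_left_Ioi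
    (fun y : ℝ => fAux m (t * ((⌊y / t⌋₊ : ℝ) + m))) 0 ht
  have hi := (integrableOn_Ioi_comp_mul_left_iff
    (fun y : ℝ => fAux m (t * ((⌊y / t⌋₊ : ℝ) + m))) 0 ht).2 (by
      rw [mul_zero]; exact G_int m hm ht)
  simp only [mul_div_cancel_left₀ _ ht.ne', mul_zero, smul_eq_mul] at hc hi
  rw [sum_aux (fun w : ℕ => fAux m (t * ((w : ℝ) + m))) hi] at hc
  rw [hc, mul_inv_cancel_left₀ ht.ne']

lemma main_aux (m : ℕ) (hm : 1 ≤ m) :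
    Tendsto (fun t : ℝ => t * ∑' w : ℕ, fAux m (t * ((w : ℝ) + m)))
      (nhdsWithin 0 (Ioi 0)) (nhds (∫ x in Ioi (0 : ℝ), fAux m x)) := by
  have key : Tendsto (fun t : ℝ => ∫ y in Ioi (0 : ℝ), fAux m (t * ((⌊y / t⌋₊ : ℝ) + m)))
      (nhdsWithin 0 (Ioi 0)) (nhds (∫ x in Ioi (0 : ℝ), fAux m x)) := by
    refine tendsto_integral_filter_of_dominated_convergence
      (fun y => (m * m.factorial * Real.exp (1 / 2)) * Real.exp (-y)) ?_ ?_ (bound_int m) ?_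
    · exact Eventually.of_forall fun t => (G_meas m t).aestronglyMeasurable
    · filter_upwards [self_mem_nhdsWithin] with t ht
      filter_upwards [ae_restrict_mem measurableSet_Ioi] with y hy
      exact G_bound m hm ht hy
    · filter_upwards [ae_restrict_mem measurableSet_Ioi] with y hy
      refine (fAux_cont m hy).tendsto.comp ?_
      refine tendsto_of_tendsto_of_tendsto_of_le_of_le' (g := fun _ => y)
        (h := fun t => y + t * m) tendsto_const_nhds ?_ ?_ ?_
      · have : Continuous fun t : ℝ => y + t * m := by fun_prop
        have h := this.tendsto 0
        simp only [zero_mul, add_zero] at h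
        exact h.mono_left nhdsWithin_le_nhds
      · filter_upwards [self_mem_nhdsWithin] with t ht
        exact G_ge m hm ht y
      · filter_upwards [self_mem_nhdsWithin] with t ht
        exact G_le m ht hy
  refine key.congr' ?_
  filter_upwards [self_mem_nhdsWithin] with t ht
  exact G_integral m hm ht

theorem stmt15 (n : ℕ) (hn : 2 ≤ n) :
    Tendsto (fun t : ℝ => t ^ n * ∑' w : ℕ,
        ((w : ℝ) + n - 1) ^ (n - 1) *
          (1 / (1 - Real.exp (-2 * t * ((w : ℝ) + n - 1))) ^ (n - 1) - 1))
      (nhdsWithin 0 (Set.Ioi 0))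
      (nhds (∫ x in Set.Ioi (0 : ℝ),
        x ^ (n - 1) * (1 / (1 - Real.exp (-2 * x)) ^ (n - 1) - 1))) := by
  obtain ⟨m, rfl⟩ : ∃ m, n = m + 1 := ⟨n - 1, by omega⟩
  have hmain := main_aux m (by omega)
  unfold fAux at hmain
  rw [Nat.add_sub_cancel]
  refine hmain.congr fun t => ?_
  rw [pow_succ', mul_assoc, ← tsum_mul_left (a := t ^ m)]
  congr 1
  refine tsum_congr fun w => ?_
  have e : (w : ℝ) + ((m + 1 : ℕ) : ℝ) - 1 = w + m := by push_cast; ring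
  rw [e, mul_pow, mul_assoc, ← mul_assoc (-2 : ℝ)]
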